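/- There exist ternary operations p_0,p_1,p_2,p_3 on {0,1,2}, each preserving C_3 and B_n for every n ≥ 2, satisfying the quasi Hagemann–Mitschke condition QHM(3); and there do NOT exist ternary operations p_0,p_1,p_2,p_3 on {0,1,2}, each preserving C_3, ≤_2, and B_2, satisfying QHM(3). -/

import Mathlib

/-- The three-element domain `{0,1,2}`. -/
abbrev D3 : Type := Fin 3

/-- `n`-ary operations on `{0,1,2}`. -/
abbrev Op (n : ℕ) : Type := (Fin n → D3) → D3

/-- An `n`-ary operation `f` preserves a `k`-ary relation `R`. -/
def Preserves {n k : ℕ} (f : Op n) (R : Set (Fin k → D3)) : Prop :=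
  ∀ t : Fin n → (Fin k → D3), (∀ i, t i ∈ R) → (fun j => f fun i => t i j) ∈ R

/-- `C₃ = {(0,1),(1,2),(2,0)}`. -/
def C3rel : Set (Fin 2 → D3) :=
  { t | (t 0 = 0 ∧ t 1 = 1) ∨ (t 0 = 1 ∧ t 1 = 2) ∨ (t 0 = 2 ∧ t 1 = 0) }

/-- `≤₂ = {(0,0),(0,1),(1,1)}`. -/
def le2rel : Set (Fin 2 → D3) :=
  { t | (t 0 = 0 ∧ t 1 = 0) ∨ (t 0 = 0 ∧ t 1 = 1) ∨ (t 0 = 1 ∧ t 1 = 1) }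

/-- `B_k = {0,1}^k \ {(0,…,0)}`. -/
def BnRel (k : ℕ) : Set (Fin k → D3) :=
  { t | (∀ i, t i = 0 ∨ t i = 1) ∧ ¬ ∀ i, t i = 0 }

/-- The quasi Hagemann–Mitschke condition `QHM(3)` for ternary operations `p₀,p₁,p₂,p₃`. -/
def QHM3 (p0 p1 p2 p3 : Op 3) : Prop :=
  (∀ x y z : D3, p0 ![x, y, z] = p0 ![x, x, x]) ∧
  (∀ x y z : D3, p3 ![x, y, z] = p3 ![z, z, z]) ∧
  (∀ x y : D3, p0 ![x, x, y] = p1 ![x, y, y] ∧ p1 ![x, x, y] = p2 ![x, y, y] ∧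
    p2 ![x, x, y] = p3 ![x, y, y])

/-- Preserving `C₃` and `B_k` for every `k ≥ 2`. -/
def PresBinf (f : Op 3) : Prop :=
  Preserves f C3rel ∧ ∀ k, 2 ≤ k → Preserves f (BnRel k)

/-- Preserving `C₃`, `≤₂` and `B₂`. -/
def PresM2 (f : Op 3) : Prop :=
  Preserves f C3rel ∧ Preserves f le2rel ∧ Preserves f (BnRel 2)

theorem c3_iff (t : Fin 2 → D3) : t ∈ C3rel ↔ t 1 = t 0 + 1 := by
  simp only [C3rel, Set.mem_ofPred_eq]
  generalize t 0 = a
  generalize t 1 = b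
  revert a b
  decide

theorem presBinf_of (f : Op 3) (i : Fin 3) (hc : ∀ x y z, f ![x+1, y+1, z+1] = f ![x, y, z] + 1)
    (hb : ∀ x y z : D3, (x = 0 ∨ x = 1) → (y = 0 ∨ y = 1) → (z = 0 ∨ z = 1) →
      (f ![x, y, z] = 0 ∨ f ![x, y, z] = 1) ∧ (f ![x, y, z] = 0 → ![x, y, z] i = 0)) :
    PresBinf f := by
  have e : ∀ v : Fin 3 → D3, v = ![v 0, v 1, v 2] := fun v => by
    ext j; fin_cases j <;> rfl
  refine ⟨fun t ht => ?_, fun k _ t ht => ?_⟩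
  · rw [c3_iff]
    have h := fun j => (c3_iff (t j)).1 (ht j)
    have := hc (t 0 0) (t 1 0) (t 2 0)
    rw [← h 0, ← h 1, ← h 2] at this
    show f (fun i => t i 1) = f (fun i => t i 0) + 1
    rw [e (fun i => t i 1), e (fun i => t i 0)]
    exact this
  · have key := fun j => hb (t 0 j) (t 1 j) (t 2 j) ((ht 0).1 j) ((ht 1).1 j) ((ht 2).1 j)
    have e2 : ∀ j, ![t 0 j, t 1 j, t 2 j] = fun i => t i j := fun j => (e (fun i => t i j)).symm
    simp only [e2] at key
    exact ⟨fun j => (key j).1, fun h => (ht i).2 fun j => (key j).2 (h j)⟩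

/-- `QHM(3)` holds in `B_∞` but not in `M₂`. -/
theorem stmt19 :
    (∃ p0 p1 p2 p3 : Op 3, PresBinf p0 ∧ PresBinf p1 ∧ PresBinf p2 ∧ PresBinf p3 ∧
      QHM3 p0 p1 p2 p3) ∧
    ¬ (∃ p0 p1 p2 p3 : Op 3, PresM2 p0 ∧ PresM2 p1 ∧ PresM2 p2 ∧ PresM2 p3 ∧
      QHM3 p0 p1 p2 p3) := by
  refine ⟨⟨fun v => v 0, fun v => if v 1 = v 0 ∧ v 2 = v 0 + 1 then v 2 else v 0,
    fun v => if v 1 = v 2 ∧ v 0 = v 2 + 1 then v 0 else v 2, fun v => v 2,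
    presBinf_of _ 0 (by decide) (by decide), presBinf_of _ 0 (by decide) (by decide),
    presBinf_of _ 2 (by decide) (by decide), presBinf_of _ 2 (by decide) (by decide),
    by unfold QHM3; decide⟩, ?_⟩
  rintro ⟨p0, p1, p2, p3, h0, h1, h2, h3, q0, q3, q⟩
  have e : ∀ (f : Op 3) (a b c : Fin 2 → D3) (j : Fin 2),
      (f fun i => (![a, b, c] : Fin 3 → Fin 2 → D3) i j) = f ![a j, b j, c j] := by
    intro f a b c j
    congr 1
    ext i; fin_cases i <;> rfl
  -- closure of B₂, C₃, ≤₂ in curried form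
  have B : ∀ f : Op 3, PresM2 f → ∀ a b c : Fin 2 → D3, a ∈ BnRel 2 → b ∈ BnRel 2 → c ∈ BnRel 2 →
      (f ![a 0, b 0, c 0] = 0 ∨ f ![a 0, b 0, c 0] = 1) ∧
      ¬ (f ![a 0, b 0, c 0] = 0 ∧ f ![a 1, b 1, c 1] = 0) := by
    intro f hf a b c ha hb hc
    have := hf.2.2 ![a, b, c] (by intro i; fin_cases i <;> assumption)
    simp only [e] at this
    exact ⟨this.1 0, fun h => this.2 (by intro j; fin_cases j; exacts [h.1, h.2])⟩
  have C : ∀ f : Op 3, PresM2 f → ∀ x y z, f ![x+1, y+1, z+1] = f ![x, y, z] + 1 := by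
    intro f hf x y z
    have := hf.1 ![![x, x+1], ![y, y+1], ![z, z+1]]
      (by intro i; rw [c3_iff]; fin_cases i <;> rfl)
    rw [c3_iff] at this
    simp only [e] at this
    exact this
  have L : ∀ f : Op 3, PresM2 f → f ![0, 1, 1] = 0 → f ![0, 0, 1] = 0 := by
    intro f hf h
    have := hf.2.1 ![![0, 0], ![0, 1], ![1, 1]]
      (by intro i; fin_cases i <;> simp [le2rel])
    simp only [le2rel, Set.mem_ofPred_eq, e] at this
    simp at this
    rw [h] at this
    simpa using this
  have m10 : (![1, 0] : Fin 2 → D3) ∈ BnRel 2 := by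
    refine ⟨by decide, by decide⟩
  have m01 : (![0, 1] : Fin 2 → D3) ∈ BnRel 2 := by
    refine ⟨by decide, by decide⟩
  have m11 : (![1, 1] : Fin 2 → D3) ∈ BnRel 2 := by
    refine ⟨by decide, by decide⟩
  have I : ∀ f : Op 3, PresM2 f → f ![0, 0, 0] = 0 := by
    intro f hf
    have a0 := (B f hf _ _ _ m01 m01 m01).1
    have a1 := (B f hf _ _ _ m10 m10 m10).1
    have c := C f hf 0 0 0
    simp at a0 a1 c
    rw [c] at a1
    clear c
    generalize f ![0, 0, 0] = w at *
    revert w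
    decide
  have s1 : p1 ![0, 1, 1] = 0 := by
    rw [← (q 0 1).1, q0, I p0 h0]
  have s2 : p2 ![0, 1, 1] = 0 := by
    rw [← (q 0 1).2.1, L p1 h1 s1]
  have s3 : p2 ![1, 1, 0] = 0 := by
    rw [(q 1 0).2.2, q3, I p3 h3]
  exact (B p2 h2 _ _ _ m01 m11 m10).2 ⟨s2, s3⟩
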